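/- arXiv:2404.03670 — 2 statements merged into one kernel-verified Lean document; each statement's English description precedes it below -/
import Mathlib

section
/- Consider a network satisfying the regularity assumptions. Then the infimum of Σ_{a∈A} c_a(x_a) over all CP-feasible pairs equals the infimum of Σ_{a∈A} c_a(x_a) over all equality-feasible pairs, and a pair (x, y) is CP-feasible with value attaining the former infimum if and only if it is equality-feasible with value attaining the latter infimum. -/
/-!
The two programs are compared through one statement about waste: if `(x, y)` is feasible for the
relaxed program but not for the equality-constrained one, then some feasible `(x', y')` has
`x' ≤ x` with strict inequality on an arc leaving the source (`IsReq.exists_improvement`).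

To see this, sink demands are first absorbed into a requirement `e` at every vertex, so that all
vertex constraints read `out(v) + e(v) ≤ in(v)`. Waste on an arc becomes slack at its tail (or a
direct improvement, when the tail is the source) by lowering `x` slightly on that arc. A vertex
with slack is reachable from the source along arcs of positive flow: otherwise, summing the
constraints over the set of its ancestors along such arcs would give more flow entering that set
than leaving its vertices, although all the entering flow originates in the set and `γ_a(ξ) ≤ ξ`
(`IsReq.reachable_of_slack`). Finally, slack is pushed backwards along such a path, one arc at a
time, until an arc leaving the source is reached (`IsReq.improve_of_reachable`).

Strict monotonicity of the cost on source arcs then shows that optima of the relaxed program are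
equality-feasible. The infima agree although the costs need not be lower semicontinuous, so that
optima need not exist: below any feasible `x`, a minimiser of the continuous function `∑ x'`
exists by compactness, it is equality-feasible by the same statement, and it costs no more
than `x`.
-/

open Finset

/-- Total flow going out of vertex `v`. -/
def outFlow {V A : Type} [Fintype A] [DecidableEq V] (tail : A → V) (x : A → ℝ) (v : V) : ℝ :=
  ∑ a : A, if tail a = v then x a else 0

/-- Total flow coming into vertex `v`. -/
def inFlow {V A : Type} [Fintype A] [DecidableEq V] (head : A → V) (y : A → ℝ) (v : V) : ℝ :=
  ∑ a : A, if head a = v then y a else 0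

/-- Feasibility for the relaxed convex program (waste allowed). -/
def CPFeasible {V A : Type} [Fintype A] [DecidableEq V] (tail head : A → V) (sstar : V)
    (D : Set V) (u : A → ℝ) (γ : A → ℝ → ℝ) (dem : V → ℝ) (x y : A → ℝ) : Prop :=
  (∀ a, 0 ≤ y a) ∧ (∀ a, y a ≤ γ a (x a)) ∧ (∀ a, x a ≤ u a) ∧
  (∀ v, v ≠ sstar → v ∉ D → outFlow tail x v ≤ inFlow head y v) ∧
  (∀ d ∈ D, dem d ≤ inFlow head y d)

/-- Feasibility with equality constraints (no waste). -/
def EqFeasible {V A : Type} [Fintype A] [DecidableEq V] (tail head : A → V) (sstar : V)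
    (D : Set V) (u : A → ℝ) (γ : A → ℝ → ℝ) (dem : V → ℝ) (x y : A → ℝ) : Prop :=
  (∀ a, 0 ≤ y a) ∧ (∀ a, y a = γ a (x a)) ∧ (∀ a, x a ≤ u a) ∧
  (∀ v, v ≠ sstar → v ∉ D → outFlow tail x v = inFlow head y v) ∧
  (∀ d ∈ D, inFlow head y d = dem d)

/-! ### Perturbing a feasible pair on one arc -/

section Helpers

variable {V A : Type} [Fintype A] [DecidableEq V]
  {tail head : A → V} {sstar : V} {u : A → ℝ} {γ : A → ℝ → ℝ} {e : V → ℝ} {x y : A → ℝ}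

/-- The relaxed constraints in uniform shape: every vertex `v` other than the source must receive
at least what it sends out plus a requirement `e v`. For a network whose sinks have no out-arcs,
taking `e` to be the demand on sinks and `0` elsewhere gives `CPFeasible`. -/
structure IsReq (tail head : A → V) (sstar : V) (u : A → ℝ) (γ : A → ℝ → ℝ) (e : V → ℝ)
    (x y : A → ℝ) : Prop where
  nonneg : ∀ a, 0 ≤ y a
  le_gain : ∀ a, y a ≤ γ a (x a)
  le_cap : ∀ a, x a ≤ u a
  bal : ∀ v, v ≠ sstar → outFlow tail x v + e v ≤ inFlow head y v

/-- `(x', y')` improves on `x`: it is feasible, uses no more flow on any arc, and strictly less on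
some arc leaving the source. -/
def Improves (tail head : A → V) (sstar : V) (u : A → ℝ) (γ : A → ℝ → ℝ) (e : V → ℝ)
    (x x' y' : A → ℝ) : Prop :=
  IsReq tail head sstar u γ e x' y' ∧ (∀ a, x' a ≤ x a) ∧ ∃ a, tail a = sstar ∧ x' a < x a

lemma sum_update_ite [DecidableEq A] (f : A → V) (x : A → ℝ) (a : A) (t : ℝ) (v : V) :
    (∑ b : A, if f b = v then Function.update x a t b else 0)
      = (∑ b : A, if f b = v then x b else 0) + if f a = v then t - x a else 0 := by
  rw [← sub_eq_iff_eq_add', ← Finset.sum_sub_distrib, Finset.sum_eq_single a]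
  · split_ifs <;> simp
  · intro b _ hb
    simp [Function.update_of_ne hb]
  · simp

lemma IsReq.x_nonneg (h : IsReq tail head sstar u γ e x y) (hγmono : ∀ a, StrictMono (γ a))
    (hγ0 : ∀ a, γ a 0 = 0) (a : A) : 0 ≤ x a := by
  rw [← (hγmono a).le_iff_le, hγ0]
  exact (h.nonneg a).trans (h.le_gain a)

/-- Lowering the flow on an arc `a` to `t` and its output to `s` keeps feasibility as long as the
head of `a` can afford the loss `y a - s`, and leaves strict slack at the tail of `a`. -/
lemma IsReq.perturb [DecidableEq A] (h : IsReq tail head sstar u γ e x y) (a : A) {t s : ℝ}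
    (ht : t < x a) (hs0 : 0 ≤ s) (hsy : s ≤ y a) (hst : s ≤ γ a t)
    (hhead : outFlow tail x (head a) + e (head a) + (y a - s) ≤ inFlow head y (head a)) :
    IsReq tail head sstar u γ e (Function.update x a t) (Function.update y a s) ∧
    (tail a ≠ sstar → outFlow tail (Function.update x a t) (tail a) + e (tail a)
      < inFlow head (Function.update y a s) (tail a)) := by
  have hout : ∀ v, outFlow tail (Function.update x a t) v
      = outFlow tail x v + if tail a = v then t - x a else 0 := sum_update_ite tail x a t
  have hin : ∀ v, inFlow head (Function.update y a s) v
      = inFlow head y v + if head a = v then s - y a else 0 := sum_update_ite head y a s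
  refine ⟨⟨?_, ?_, ?_, ?_⟩, ?_⟩
  · intro b
    rcases eq_or_ne b a with rfl | hb
    · simpa using hs0
    · simpa [Function.update_of_ne hb] using h.nonneg b
  · intro b
    rcases eq_or_ne b a with rfl | hb
    · simpa using hst
    · simpa [Function.update_of_ne hb] using h.le_gain b
  · intro b
    rcases eq_or_ne b a with rfl | hb
    · simpa using ht.le.trans (h.le_cap b)
    · simpa [Function.update_of_ne hb] using h.le_cap b
  · intro v hv
    rw [hout, hin]
    have := h.bal v hv
    by_cases h2 : head a = v
    · subst h2
      split_ifs <;> linarith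
    · rw [if_neg h2]
      split_ifs <;> linarith
  · intro hv
    rw [hout, hin, if_pos rfl]
    have := h.bal _ hv
    by_cases h2 : head a = tail a
    · rw [h2] at hhead
      rw [if_pos h2]
      linarith
    · rw [if_neg h2]
      linarith

lemma exists_lt_of_lt_gain {g : ℝ → ℝ} (hg : Continuous g) {ξ r : ℝ} (h : r < g ξ) :
    ∃ t, t < ξ ∧ r ≤ g t := by
  have h1 : ∀ᶠ t in nhdsWithin ξ (Set.Iio ξ), r < g t :=
    (hg.continuousAt.eventually_const_lt h).filter_mono nhdsWithin_le_nhds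
  obtain ⟨t, h2, h3⟩ := (h1.and self_mem_nhdsWithin).exists
  exact ⟨t, h3, h2.le⟩

lemma update_le_of_lt {B : Type} [DecidableEq B] {z : B → ℝ} {a : B} {t : ℝ} (ht : t < z a)
    (b : B) : Function.update z a t b ≤ z b := by
  rcases eq_or_ne b a with rfl | hb
  · simpa using ht.le
  · simp [Function.update_of_ne hb]

/-! ### Pushing slack back to the source -/

/-- Slack at a vertex reachable from the source along arcs in `P` can be pushed back to the source.
The arc set `P` is fixed while the pair varies, because each backward step changes the flow but
keeps it positive on `P`. -/
lemma IsReq.improve_of_reachable (hγcont : ∀ a, Continuous (γ a)) (P : Set A) {v : V}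
    (hv : Relation.ReflTransGen (fun w v => ∃ a ∈ P, tail a = w ∧ head a = v) sstar v) :
    ∀ x y : A → ℝ, IsReq tail head sstar u γ e x y → (∀ a ∈ P, 0 < y a) → v ≠ sstar →
      outFlow tail x v + e v < inFlow head y v →
      ∃ x' y', Improves tail head sstar u γ e x x' y' := by
  classical
  induction hv with
  | refl => exact fun x y _ _ hne => absurd rfl hne
  | tail _ hstep ih =>
    rename_i w v
    obtain ⟨a, haP, rfl, rfl⟩ := hstep
    intro x y h hP hne hslack
    -- The output of `a` drops by `δ`, which uses at most the slack and half of `y a`.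
    obtain ⟨δ, hδ0, hδ1, hδ2⟩ : ∃ δ : ℝ, 0 < δ ∧ δ < y a ∧
        outFlow tail x (head a) + e (head a) + δ ≤ inFlow head y (head a) := by
      have hya := hP a haP
      refine ⟨min (inFlow head y (head a) - (outFlow tail x (head a) + e (head a))) (y a / 2),
        lt_min (by linarith) (by linarith), (min_le_right _ _).trans_lt (by linarith), ?_⟩
      have := min_le_left
        (inFlow head y (head a) - (outFlow tail x (head a) + e (head a))) (y a / 2)
      linarith
    obtain ⟨t, ht, hst⟩ := exists_lt_of_lt_gain (hγcont a)
      (show y a - δ < γ a (x a) by have := h.le_gain a; linarith)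
    obtain ⟨h', hs'⟩ := h.perturb a ht (by linarith) (by linarith) hst (by linarith)
    by_cases hsrc : tail a = sstar
    · exact ⟨_, _, h', update_le_of_lt ht, a, hsrc, by simpa using ht⟩
    · obtain ⟨x', y', hx', hle, b, hb, hlt⟩ := ih _ _ h' (by
        intro b hb
        rcases eq_or_ne b a with rfl | hba
        · simpa using hδ1
        · simpa [Function.update_of_ne hba] using hP b hb) hsrc (hs' hsrc)
      exact ⟨x', y', hx', fun b => (hle b).trans (update_le_of_lt ht b), b, hb,
        hlt.trans_le (update_le_of_lt ht b)⟩

lemma sum_sum_ite_eq (S : Finset V) (f : A → V) (x : A → ℝ) :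
    (∑ v ∈ S, ∑ a : A, if f a = v then x a else 0) = ∑ a : A, if f a ∈ S then x a else 0 := by
  rw [Finset.sum_comm]
  simp

/-- A vertex with slack receives flow from the source along arcs of positive flow. -/
lemma IsReq.reachable_of_slack [Fintype V] (h : IsReq tail head sstar u γ e x y)
    (hγmono : ∀ a, StrictMono (γ a)) (hγ0 : ∀ a, γ a 0 = 0)
    (hγle : ∀ a, ∀ ξ : ℝ, 0 ≤ ξ → γ a ξ ≤ ξ) (he : ∀ v, 0 ≤ e v) {v : V}
    (hslack : outFlow tail x v + e v < inFlow head y v) :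
    Relation.ReflTransGen (fun w v => ∃ a ∈ {a | 0 < y a}, tail a = w ∧ head a = v) sstar v := by
  classical
  by_contra hs
  let R : V → V → Prop := fun w v => ∃ a ∈ {a | 0 < y a}, tail a = w ∧ head a = v
  let S : Finset V := Finset.univ.filter fun w => Relation.ReflTransGen R w v
  have hlt : ∑ w ∈ S, outFlow tail x w < ∑ w ∈ S, inFlow head y w := by
    refine Finset.sum_lt_sum (fun w hw => ?_) ⟨v, ?_, ?_⟩
    · have hw' : Relation.ReflTransGen R w v := (Finset.mem_filter.mp hw).2
      have hne : w ≠ sstar := by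
        rintro rfl
        exact hs hw'
      have := h.bal w hne
      have := he w
      linarith
    · exact Finset.mem_filter.mpr ⟨Finset.mem_univ _, Relation.ReflTransGen.refl⟩
    · have := he v
      linarith
  have hge : ∑ w ∈ S, inFlow head y w ≤ ∑ w ∈ S, outFlow tail x w := by
    unfold inFlow outFlow
    rw [sum_sum_ite_eq, sum_sum_ite_eq]
    refine Finset.sum_le_sum fun a _ => ?_
    have hx := h.x_nonneg hγmono hγ0 a
    have hyx := (h.le_gain a).trans (hγle a _ hx)
    rcases (h.nonneg a).eq_or_lt with hy | hy
    · rw [← hy]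
      split_ifs <;> simp [hx]
    · by_cases hh : head a ∈ S
      · have ht : tail a ∈ S := Finset.mem_filter.mpr ⟨Finset.mem_univ _,
          Relation.ReflTransGen.head ⟨a, hy, rfl, rfl⟩ (Finset.mem_filter.mp hh).2⟩
        rwa [if_pos hh, if_pos ht]
      · rw [if_neg hh]
        split_ifs <;> simp [hx]
  exact absurd hlt hge.not_gt

/-- Any waste, on an arc or at a vertex, allows an improvement. -/
lemma IsReq.exists_improvement [Fintype V] (h : IsReq tail head sstar u γ e x y)
    (hγcont : ∀ a, Continuous (γ a)) (hγmono : ∀ a, StrictMono (γ a)) (hγ0 : ∀ a, γ a 0 = 0)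
    (hγle : ∀ a, ∀ ξ : ℝ, 0 ≤ ξ → γ a ξ ≤ ξ) (hnoin : ∀ a, head a ≠ sstar) (he : ∀ v, 0 ≤ e v)
    (hwaste : ¬ ((∀ a, y a = γ a (x a)) ∧
      ∀ v, v ≠ sstar → outFlow tail x v + e v = inFlow head y v)) :
    ∃ x' y', Improves tail head sstar u γ e x x' y' := by
  classical
  have key : ∀ x y : A → ℝ, IsReq tail head sstar u γ e x y → ∀ v, v ≠ sstar →
      outFlow tail x v + e v < inFlow head y v →
      ∃ x' y', Improves tail head sstar u γ e x x' y' := fun x y h v hne hsl =>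
    IsReq.improve_of_reachable hγcont {a | 0 < y a}
      (h.reachable_of_slack hγmono hγ0 hγle he hsl) x y h (fun _ ha => ha) hne hsl
  by_cases harc : ∀ a, y a = γ a (x a)
  · have hvert : ¬ ∀ v, v ≠ sstar → outFlow tail x v + e v = inFlow head y v :=
      fun hv => hwaste ⟨harc, hv⟩
    push Not at hvert
    obtain ⟨v, hne, hv⟩ := hvert
    exact key x y h v hne (lt_of_le_of_ne (h.bal v hne) hv)
  · push Not at harc
    obtain ⟨a, ha⟩ := harc
    obtain ⟨t, ht, hst⟩ := exists_lt_of_lt_gain (hγcont a) (lt_of_le_of_ne (h.le_gain a) ha)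
    obtain ⟨h', hs'⟩ := h.perturb a ht (h.nonneg a) le_rfl hst
      (by simpa using h.bal _ (hnoin a))
    by_cases hsrc : tail a = sstar
    · exact ⟨_, _, h', update_le_of_lt ht, a, hsrc, by simpa using ht⟩
    · obtain ⟨x', y', hx', hle, b, hb, hlt⟩ := key _ _ h' _ hsrc (hs' hsrc)
      exact ⟨x', y', hx', fun b => (hle b).trans (update_le_of_lt ht b), b, hb,
        hlt.trans_le (update_le_of_lt ht b)⟩

/-! ### A waste-free pair below any feasible pair -/

lemma IsReq.exists_minimal (h : IsReq tail head sstar u γ e x y)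
    (hγcont : ∀ a, Continuous (γ a)) (hγmono : ∀ a, StrictMono (γ a)) (hγ0 : ∀ a, γ a 0 = 0)
    (hγle : ∀ a, ∀ ξ : ℝ, 0 ≤ ξ → γ a ξ ≤ ξ) :
    ∃ x' y', IsReq tail head sstar u γ e x' y' ∧ (∀ a, x' a ≤ x a) ∧
      ∀ x'' y'', IsReq tail head sstar u γ e x'' y'' → (∀ a, x'' a ≤ x a) →
        ∑ a, x' a ≤ ∑ a, x'' a := by
  let K : Set ((A → ℝ) × (A → ℝ)) :=
    {p | IsReq tail head sstar u γ e p.1 p.2 ∧ ∀ a, p.1 a ≤ x a}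
  have hK : K = {p | (∀ a, 0 ≤ p.2 a) ∧ (∀ a, p.2 a ≤ γ a (p.1 a)) ∧ (∀ a, p.1 a ≤ u a) ∧
      (∀ v, v ≠ sstar → outFlow tail p.1 v + e v ≤ inFlow head p.2 v) ∧
      ∀ a, p.1 a ≤ x a} := by
    ext p
    exact ⟨fun ⟨⟨h1, h2, h3, h4⟩, h5⟩ => ⟨h1, h2, h3, h4, h5⟩,
      fun ⟨h1, h2, h3, h4, h5⟩ => ⟨⟨h1, h2, h3, h4⟩, h5⟩⟩
  have hsum : ∀ (f : A → V) (v : V),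
      Continuous fun z : A → ℝ => ∑ a : A, if f a = v then z a else 0 := by
    intro f v
    refine continuous_finsetSum _ fun a _ => ?_
    split_ifs <;> fun_prop
  have hclosed : IsClosed K := by
    rw [hK]
    simp only [Set.ofPred_and, Set.ofPred_forall]
    refine IsClosed.inter (isClosed_iInter fun a => ?_) (IsClosed.inter
      (isClosed_iInter fun a => ?_) (IsClosed.inter (isClosed_iInter fun a => ?_)
      (IsClosed.inter (isClosed_iInter fun v => isClosed_iInter fun _ => ?_)
      (isClosed_iInter fun a => ?_))))
    · exact isClosed_le (by fun_prop) (by fun_prop)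
    · exact isClosed_le (by fun_prop) ((hγcont a).comp (by fun_prop))
    · exact isClosed_le (by fun_prop) (by fun_prop)
    · exact isClosed_le (((hsum tail v).comp continuous_fst).add continuous_const)
        ((hsum head v).comp continuous_snd)
    · exact isClosed_le (by fun_prop) (by fun_prop)
  have hsub : K ⊆ Set.Icc (0, 0) (x, x) := by
    rintro ⟨x', y'⟩ ⟨h', hle⟩
    have hx := h'.x_nonneg hγmono hγ0
    exact ⟨⟨hx, h'.nonneg⟩,
      ⟨hle, fun a => ((h'.le_gain a).trans (hγle a _ (hx a))).trans (hle a)⟩⟩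
  have hcpt : IsCompact K := isCompact_Icc.of_isClosed_subset hclosed hsub
  obtain ⟨⟨x', y'⟩, ⟨h1, h2⟩, hmin⟩ := hcpt.exists_isMinOn ⟨(x, y), h, fun _ => le_rfl⟩
    (f := fun p => ∑ a, p.1 a) (by fun_prop)
  exact ⟨x', y', h1, h2, fun x'' y'' h3 h4 =>
    isMinOn_iff.mp hmin (x'', y'') ⟨h3, h4⟩⟩

end Helpers

/-- The relaxed convex program and the equality-constrained program have the same optimal
value (infima taken in the extended reals), and the same set of optimal solutions. -/
theorem CP_and_Eq_share_optima
    {V A : Type} [Fintype V] [Fintype A] [Nonempty A] [DecidableEq V]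
    (tail head : A → V) (sstar : V) (D : Set V) (hD : sstar ∉ D)
    (u : A → ℝ) (hu : ∀ a, 0 ≤ u a)
    (γ c : A → ℝ → ℝ)
    (hγcont : ∀ a, Continuous (γ a)) (hγmono : ∀ a, StrictMono (γ a))
    (hγ0 : ∀ a, γ a 0 = 0) (hγle : ∀ a, ∀ ξ : ℝ, 0 ≤ ξ → γ a ξ ≤ ξ)
    (hcmono : ∀ a, Monotone (c a)) (hc0 : ∀ a, c a 0 = 0)
    (hcsrc : ∀ a, tail a = sstar → StrictMono (c a))
    (hnoin : ∀ a, head a ≠ sstar) (hnoout : ∀ a, tail a ∉ D)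
    (dem : V → ℝ) (hdem : ∀ d ∈ D, 0 ≤ dem d) :
    sInf {w : EReal | ∃ x y : A → ℝ, CPFeasible tail head sstar D u γ dem x y ∧
        w = ((∑ a : A, c a (x a) : ℝ) : EReal)}
      = sInf {w : EReal | ∃ x y : A → ℝ, EqFeasible tail head sstar D u γ dem x y ∧
        w = ((∑ a : A, c a (x a) : ℝ) : EReal)} ∧
    ∀ x y : A → ℝ,
      (CPFeasible tail head sstar D u γ dem x y ∧
        ((∑ a : A, c a (x a) : ℝ) : EReal)
          = sInf {w : EReal | ∃ x' y' : A → ℝ, CPFeasible tail head sstar D u γ dem x' y' ∧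
              w = ((∑ a : A, c a (x' a) : ℝ) : EReal)}) ↔
      (EqFeasible tail head sstar D u γ dem x y ∧
        ((∑ a : A, c a (x a) : ℝ) : EReal)
          = sInf {w : EReal | ∃ x' y' : A → ℝ, EqFeasible tail head sstar D u γ dem x' y' ∧
              w = ((∑ a : A, c a (x' a) : ℝ) : EReal)}) := by
  classical
  let e : V → ℝ := fun v => if v ∈ D then dem v else 0
  have he : ∀ v, 0 ≤ e v := by
    intro v
    by_cases hv : v ∈ D
    · simpa [e, hv] using hdem v hv
    · simp [e, hv]
  have hout0 : ∀ (x : A → ℝ), ∀ d ∈ D, outFlow tail x d = 0 := by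
    intro x d hd
    refine Finset.sum_eq_zero fun a _ => if_neg ?_
    rintro rfl
    exact hnoout a hd
  have hCP : ∀ x y, CPFeasible tail head sstar D u γ dem x y ↔
      IsReq tail head sstar u γ e x y := by
    intro x y
    constructor
    · rintro ⟨h1, h2, h3, h4, h5⟩
      refine ⟨h1, h2, h3, fun v hv => ?_⟩
      by_cases hvD : v ∈ D
      · simpa [e, hvD, hout0 x v hvD] using h5 v hvD
      · simpa [e, hvD] using h4 v hv hvD
    · rintro ⟨h1, h2, h3, h4⟩
      refine ⟨h1, h2, h3, fun v hv hvD => ?_, fun d hd => ?_⟩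
      · simpa [e, hvD] using h4 v hv
      · simpa [e, hd, hout0 x d hd] using h4 d (ne_of_mem_of_not_mem hd hD)
  have hEq : ∀ x y, IsReq tail head sstar u γ e x y → (∀ a, y a = γ a (x a)) →
      (∀ v, v ≠ sstar → outFlow tail x v + e v = inFlow head y v) →
      EqFeasible tail head sstar D u γ dem x y := by
    rintro x y ⟨h1, -, h3, -⟩ h2 h4
    refine ⟨h1, h2, h3, fun v hv hvD => ?_, fun d hd => ?_⟩
    · simpa [e, hvD] using h4 v hv
    · simpa [e, hd, hout0 x d hd] using (h4 d (ne_of_mem_of_not_mem hd hD)).symm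
  have hEqCP : ∀ x y, EqFeasible tail head sstar D u γ dem x y →
      CPFeasible tail head sstar D u γ dem x y := by
    rintro x y ⟨h1, h2, h3, h4, h5⟩
    exact ⟨h1, fun a => (h2 a).le, h3, fun v hv hvD => (h4 v hv hvD).le,
      fun d hd => (h5 d hd).ge⟩
  have hinf : sInf {w : EReal | ∃ x y : A → ℝ, CPFeasible tail head sstar D u γ dem x y ∧
        w = ((∑ a : A, c a (x a) : ℝ) : EReal)}
      = sInf {w : EReal | ∃ x y : A → ℝ, EqFeasible tail head sstar D u γ dem x y ∧
        w = ((∑ a : A, c a (x a) : ℝ) : EReal)} := by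
    apply le_antisymm
    · refine sInf_le_sInf ?_
      rintro w ⟨x, y, h, rfl⟩
      exact ⟨x, y, hEqCP x y h, rfl⟩
    · refine le_sInf ?_
      rintro w ⟨x, y, h, rfl⟩
      obtain ⟨x', y', h', hle, hmin⟩ :=
        ((hCP x y).mp h).exists_minimal hγcont hγmono hγ0 hγle
      have hno : ¬ ∃ x'' y'', Improves tail head sstar u γ e x' x'' y'' := by
        rintro ⟨x'', y'', h'', hle', a, -, hlt⟩
        exact absurd (hmin x'' y'' h'' fun a => (hle' a).trans (hle a))
          (Finset.sum_lt_sum (fun b _ => hle' b) ⟨a, Finset.mem_univ _, hlt⟩).not_ge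
      have hfeas : EqFeasible tail head sstar D u γ dem x' y' := by
        by_contra hne
        exact hno (h'.exists_improvement hγcont hγmono hγ0 hγle hnoin he
          fun hw => hne (hEq x' y' h' hw.1 hw.2))
      refine sInf_le_of_le (b := ((∑ a : A, c a (x' a) : ℝ) : EReal)) ⟨x', y', hfeas, rfl⟩ ?_
      exact EReal.coe_le_coe_iff.mpr (Finset.sum_le_sum fun a _ => hcmono a (hle a))
  refine ⟨hinf, fun x y => ⟨?_, ?_⟩⟩
  · rintro ⟨h, hopt⟩
    refine ⟨?_, hopt.trans hinf⟩
    by_contra hne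
    obtain ⟨x', y', h', hle, a, ha, hlt⟩ :=
      ((hCP x y).mp h).exists_improvement hγcont hγmono hγ0 hγle hnoin he
        fun hw => hne (hEq x y ((hCP x y).mp h) hw.1 hw.2)
    have h1 : ((∑ a : A, c a (x a) : ℝ) : EReal) ≤ ((∑ a : A, c a (x' a) : ℝ) : EReal) :=
      hopt.le.trans (sInf_le ⟨x', y', (hCP x' y').mpr h', rfl⟩)
    exact absurd (EReal.coe_le_coe_iff.mp h1)
      (Finset.sum_lt_sum (fun b _ => hcmono b (hle b))
        ⟨a, Finset.mem_univ _, hcsrc a ha hlt⟩).not_ge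
  · rintro ⟨h, hopt⟩
    exact ⟨hEqCP x y h, hopt.trans hinf.symm⟩
end

section
/- Consider a network satisfying the regularity assumptions. For every CP-feasible pair (x, y) there exists an equality-feasible pair (x′, y′) with 0 ≤ x′_a ≤ x_a and 0 ≤ y′_a ≤ y_a for every a ∈ A and Σ_{a∈A} c_a(x′_a) ≤ Σ_{a∈A} c_a(x_a). -/
/-!
Since `0 ≤ y ≤ γ(x)` and `γ` is increasing with `γ(0) = 0`, the flow `x` is nonnegative and the
intermediate value theorem gives `x₀` with `0 ≤ x₀ ≤ x` and
`γ(x₀) = y`. The flows `z` with `0 ≤ z ≤ x₀` for which `(z, γ(z))` satisfies the relaxed vertex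
inequalities form a compact set containing `x₀`, so one of them minimizes `∑ a, z a`. At such a
minimizer every vertex inequality is tight: if vertex `v` receives more than it needs, which is a
nonnegative amount, then some arc `a` into `v` carries positive flow, and `γ a (z a)` can be
decreased by at most the slack at `v` (`exists_lower_of_slack`). This lowers the inflow at `v` only,
and raises no outflow, so the result is still in the set but has a smaller sum. The cost bound is
monotonicity of the `c a`.
-/

open Finset

theorem inFlow_update {V A : Type} [Fintype A] [DecidableEq V] [DecidableEq A] (head : A → V)
    (y : A → ℝ) (a : A) (t : ℝ) (w : V) :
    inFlow head (Function.update y a t) w = inFlow head y w + if head a = w then t - y a else 0 := by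
  have h : inFlow head (Function.update y a t) w - inFlow head y w
      = if head a = w then t - y a else 0 := by
    unfold inFlow
    rw [← Finset.sum_sub_distrib, Finset.sum_eq_single a]
    · by_cases h : head a = w <;> simp [h]
    · intro b _ hb
      simp [Function.update_of_ne hb]
    · simp
  linarith

theorem outFlow_mono {V A : Type} [Fintype A] [DecidableEq V] (tail : A → V)
    {x x' : A → ℝ} (h : x ≤ x') (v : V) : outFlow tail x v ≤ outFlow tail x' v := by
  unfold outFlow
  refine Finset.sum_le_sum fun a _ => ?_
  split_ifs
  exacts [h a, le_rfl]

theorem outFlow_nonneg {V A : Type} [Fintype A] [DecidableEq V] (tail : A → V)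
    {x : A → ℝ} (h : 0 ≤ x) (v : V) : 0 ≤ outFlow tail x v := by
  unfold outFlow
  refine Finset.sum_nonneg fun a _ => ?_
  split_ifs
  exacts [h a, le_rfl]

theorem exists_preimage {g : ℝ → ℝ} (hc : Continuous g) (h0 : g 0 = 0) {ξ η : ℝ} (hξ : 0 ≤ ξ)
    (hη : 0 ≤ η) (hle : η ≤ g ξ) : ∃ ζ, 0 ≤ ζ ∧ ζ ≤ ξ ∧ g ζ = η := by
  obtain ⟨ζ, hζ, h⟩ := intermediate_value_Icc hξ hc.continuousOn
    (show η ∈ Set.Icc (g 0) (g ξ) by rw [h0]; exact ⟨hη, hle⟩)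
  exact ⟨ζ, hζ.1, hζ.2, h⟩

/-- If vertex `v` receives more than a nonnegative amount `n`, the flow on a single arc into `v`
can be strictly decreased so that `v` still receives at least `n` and the inflow of every other vertex is unchanged. -/
theorem exists_lower_of_slack {V A : Type} [Fintype A] [DecidableEq V] (head : A → V)
    {γ : A → ℝ → ℝ} (hγcont : ∀ a, Continuous (γ a)) (hγ0 : ∀ a, γ a 0 = 0)
    {z : A → ℝ} (hz : 0 ≤ z) {v : V} {n : ℝ} (hn : 0 ≤ n)
    (hslack : n < inFlow head (fun a => γ a (z a)) v) :
    ∃ z' : A → ℝ, 0 ≤ z' ∧ z' < z ∧ n ≤ inFlow head (fun a => γ a (z' a)) v ∧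
      ∀ w, w ≠ v → inFlow head (fun a => γ a (z' a)) w = inFlow head (fun a => γ a (z a)) w := by
  classical
  obtain ⟨a, hav, hpos⟩ : ∃ a, head a = v ∧ 0 < γ a (z a) := by
    by_contra! hcon
    have : inFlow head (fun a => γ a (z a)) v ≤ 0 := by
      unfold inFlow
      refine Finset.sum_nonpos fun a _ => ?_
      split_ifs with h
      exacts [hcon a h, le_rfl]
    linarith
  set s := inFlow head (fun a => γ a (z a)) v - n with hs
  obtain ⟨t, ht0, htz, ht⟩ := exists_preimage (hγcont a) (hγ0 a) (hz a)
    (le_max_right (γ a (z a) - s) 0) (max_le (by linarith) hpos.le)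
  have htlt : t < z a := by
    refine lt_of_le_of_ne htz ?_
    rintro rfl
    have : max (γ a (z a) - s) 0 < γ a (z a) := max_lt (by linarith) hpos
    linarith
  have hupd : (fun b => γ b (Function.update z a t b))
      = Function.update (fun b => γ b (z b)) a (γ a t) := by
    ext b
    by_cases hb : b = a
    · subst hb; simp
    · simp [Function.update_of_ne hb]
  refine ⟨Function.update z a t, ?_, by simpa using htlt, ?_, ?_⟩
  · intro b
    by_cases hb : b = a
    · subst hb; simpa using ht0
    · simpa [Function.update_of_ne hb] using hz b
  · rw [hupd, inFlow_update, if_pos hav, ht]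
    have := le_max_left (γ a (z a) - s) 0
    linarith
  · intro w hw
    rw [hupd, inFlow_update, if_neg (by rw [hav]; exact hw.symm), add_zero]

/-- Waste removal: every CP-feasible pair dominates an equality-feasible pair of at most
the same cost. -/
theorem exists_EqFeasible_below_CPFeasible
    {V A : Type} [Fintype V] [Fintype A] [Nonempty A] [DecidableEq V]
    (tail head : A → V) (sstar : V) (D : Set V) (hD : sstar ∉ D)
    (u : A → ℝ) (hu : ∀ a, 0 ≤ u a)
    (γ c : A → ℝ → ℝ)
    (hγcont : ∀ a, Continuous (γ a)) (hγmono : ∀ a, StrictMono (γ a))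
    (hγ0 : ∀ a, γ a 0 = 0) (hγle : ∀ a, ∀ ξ : ℝ, 0 ≤ ξ → γ a ξ ≤ ξ)
    (hcmono : ∀ a, Monotone (c a)) (hc0 : ∀ a, c a 0 = 0)
    (hcsrc : ∀ a, tail a = sstar → StrictMono (c a))
    (hnoin : ∀ a, head a ≠ sstar) (hnoout : ∀ a, tail a ∉ D)
    (dem : V → ℝ) (hdem : ∀ d ∈ D, 0 ≤ dem d)
    (x y : A → ℝ)
    (hfeas : CPFeasible tail head sstar D u γ dem x y) :
    ∃ x' y' : A → ℝ, EqFeasible tail head sstar D u γ dem x' y' ∧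
      (∀ a, 0 ≤ x' a ∧ x' a ≤ x a) ∧ (∀ a, 0 ≤ y' a ∧ y' a ≤ y a) ∧
      ∑ a : A, c a (x' a) ≤ ∑ a : A, c a (x a) := by
  obtain ⟨hy0, hyγ, hxu, hcons, hsink⟩ := hfeas
  have hx0 : ∀ a, 0 ≤ x a := fun a =>
    (hγmono a).le_iff_le.1 (by rw [hγ0]; exact (hy0 a).trans (hyγ a))
  choose x₀ hx₀0 hx₀x hx₀y using fun a =>
    exists_preimage (hγcont a) (hγ0 a) (hx0 a) (hy0 a) (hyγ a)
  have hx₀y' : (fun a => γ a (x₀ a)) = y := funext hx₀y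
  classical
  -- The inflow that `v` must receive: its demand at a sink, its outflow elsewhere.
  let need : (A → ℝ) → V → ℝ := fun z v => if v ∈ D then dem v else outFlow tail z v
  have hneed_mono : ∀ z z' : A → ℝ, z ≤ z' → ∀ v, need z v ≤ need z' v := by
    intro z z' h v
    by_cases hv : v ∈ D
    · simp [need, hv]
    · simpa [need, hv] using outFlow_mono tail h v
  have hneed_nonneg : ∀ z : A → ℝ, 0 ≤ z → ∀ v, 0 ≤ need z v := by
    intro z h v
    by_cases hv : v ∈ D
    · simpa [need, hv] using hdem v hv
    · simpa [need, hv] using outFlow_nonneg tail h v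
  have hneed_cont : ∀ v, Continuous fun z => need z v := by
    intro v
    by_cases hv : v ∈ D
    · simpa [need, hv] using continuous_const
    · simp only [need, hv, if_false, outFlow]
      refine continuous_finsetSum _ fun a _ => ?_
      split_ifs <;> fun_prop
  have hin_cont : ∀ v, Continuous fun z : A → ℝ => inFlow head (fun a => γ a (z a)) v := by
    intro v
    unfold inFlow
    refine continuous_finsetSum _ fun a _ => ?_
    split_ifs
    · exact (hγcont a).comp (continuous_apply a)
    · exact continuous_const
  let K : Set (A → ℝ) := Set.Icc 0 x₀ ∩
    {z | ∀ v, v ≠ sstar → need z v ≤ inFlow head (fun a => γ a (z a)) v}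
  have hK : IsCompact K := by
    refine isCompact_Icc.inter_right ?_
    simp only [Set.ofPred_forall]
    exact isClosed_iInter fun v => isClosed_iInter fun _ =>
      isClosed_le (hneed_cont v) (hin_cont v)
  have hx₀K : x₀ ∈ K := by
    refine ⟨⟨hx₀0, le_rfl⟩, fun v hv => ?_⟩
    rw [hx₀y']
    by_cases hvD : v ∈ D
    · simpa [need, hvD] using hsink v hvD
    · simpa [need, hvD] using (outFlow_mono tail hx₀x v).trans (hcons v hv hvD)
  obtain ⟨z, ⟨⟨hz0, hzx₀⟩, hzneed⟩, hzmin⟩ := hK.exists_isMinOn ⟨x₀, hx₀K⟩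
    (f := fun z : A → ℝ => ∑ a, z a) (by fun_prop)
  have htight : ∀ v, v ≠ sstar → need z v = inFlow head (fun a => γ a (z a)) v := by
    intro v hv
    by_contra hne
    obtain ⟨z', hz'0, hz'z, hz'v, hz'w⟩ := exists_lower_of_slack head hγcont hγ0 hz0
      (hneed_nonneg z hz0 v) (lt_of_le_of_ne (hzneed v hv) hne)
    have hz'K : z' ∈ K := by
      refine ⟨⟨hz'0, hz'z.le.trans hzx₀⟩, fun w hw => ?_⟩
      refine (hneed_mono z' z hz'z.le w).trans ?_
      by_cases hwv : w = v
      · rw [hwv]; exact hz'v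
      · rw [hz'w w hwv]; exact hzneed w hw
    exact absurd (hzmin hz'K) (not_le.2 (Fintype.sum_strictMono hz'z))
  have hzx : ∀ a, z a ≤ x a := fun a => (hzx₀ a).trans (hx₀x a)
  have hγz0 : ∀ a, 0 ≤ γ a (z a) := fun a => by
    rw [← hγ0 a]; exact (hγmono a).monotone (hz0 a)
  refine ⟨z, fun a => γ a (z a), ⟨hγz0, fun _ => rfl, fun a => (hzx a).trans (hxu a), ?_, ?_⟩,
    fun a => ⟨hz0 a, hzx a⟩, fun a => ⟨hγz0 a, ?_⟩, Finset.sum_le_sum fun a _ => hcmono a (hzx a)⟩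
  · intro v hv hvD
    simpa [need, hvD] using htight v hv
  · intro d hd
    have := htight d (fun h => hD (h ▸ hd))
    simpa [need, hd] using this.symm
  · rw [← hx₀y a]; exact (hγmono a).monotone (hzx₀ a)
end
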